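/- arXiv:2302.13459 — 4 statements merged into one kernel-verified Lean document; each statement's English description precedes it below -/
import Mathlib

section
/- Let J = E4^3/(E4^3 - E6^2) be the normalized elliptic modular function on the upper half-plane (so J(i) = 1). Then the complex derivative of J vanishes at τ = i, the second derivative J''(i) is nonzero, and J'''(i) = 3i · J''(i). -/
open Complex Filter Topology

noncomputable section

/-- The nome `q = e^{2πiτ}`. -/
def qq (τ : ℂ) : ℂ := Complex.exp (2 * Real.pi * Complex.I * τ)

/-- The Eisenstein series `E₄(τ) = 1 + 240 Σ_{n≥1} σ₃(n) qⁿ`. -/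
def E4 (τ : ℂ) : ℂ := 1 + 240 * ∑' n : ℕ, (∑ d ∈ (n + 1).divisors, (d : ℂ) ^ 3) * qq τ ^ (n + 1)

/-- The Eisenstein series `E₆(τ) = 1 − 504 Σ_{n≥1} σ₅(n) qⁿ`. -/
def E6 (τ : ℂ) : ℂ := 1 - 504 * ∑' n : ℕ, (∑ d ∈ (n + 1).divisors, (d : ℂ) ^ 5) * qq τ ^ (n + 1)

/-- The normalized elliptic modular function `J = E₄³ / (E₄³ − E₆²)`. -/
def J (τ : ℂ) : ℂ := E4 τ ^ 3 / (E4 τ ^ 3 - E6 τ ^ 2)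

/-- The Dedekind eta function `η(τ) = e^{πiτ/12} ∏_{n≥1} (1 − qⁿ)`. -/
def dedekindEta (τ : ℂ) : ℂ := Complex.exp (Real.pi * Complex.I * τ / 12) * ∏' n : ℕ, (1 - qq τ ^ (n + 1))

/-- The elliptic point `ρ = e^{2πi/3}`. -/
def rho : ℂ := Complex.exp (2 * Real.pi * Complex.I / 3)

/-- The divisor power series `Σ_{n≥1} σ_k(n) qⁿ`. -/
def divisorPowerSeries (k : ℕ) (τ : ℂ) : ℂ :=
  ∑' n : ℕ, (∑ d ∈ (n + 1).divisors, (d : ℂ) ^ k) * qq τ ^ (n + 1)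

lemma E4_eq (τ : ℂ) : E4 τ = 1 + 240 * divisorPowerSeries 3 τ := rfl

lemma E6_eq (τ : ℂ) : E6 τ = 1 - 504 * divisorPowerSeries 5 τ := rfl

lemma norm_qq (τ : ℂ) : ‖qq τ‖ = Real.exp (-(2 * Real.pi * τ.im)) := by
  simp [qq, Complex.norm_exp]

lemma qq_I : qq I = (Real.exp (-(2 * Real.pi)) : ℝ) := by
  rw [qq, ofReal_exp]
  congr 1
  push_cast
  linear_combination (2 * Real.pi : ℂ) * I_mul_I

lemma hasDerivAt_qq_pow (n : ℕ) (τ : ℂ) :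
    HasDerivAt (fun τ ↦ qq τ ^ n) (2 * Real.pi * I * n * qq τ ^ n) τ := by
  have h : HasDerivAt (fun τ ↦ cexp (n * (2 * Real.pi * I * τ)))
      (cexp (n * (2 * Real.pi * I * τ)) * (n * (2 * Real.pi * I))) τ :=
    ((hasDerivAt_const_mul (2 * Real.pi * I : ℂ)).const_mul (n : ℂ)).cexp
  have e : (fun τ ↦ qq τ ^ n) = fun τ ↦ cexp (n * (2 * Real.pi * I * τ)) := by
    ext τ
    rw [qq, ← Complex.exp_nat_mul]
  rw [e]
  convert h using 1
  rw [qq, ← Complex.exp_nat_mul]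
  ring

lemma norm_sum_divisors_pow_le (k n : ℕ) :
    ‖∑ d ∈ n.divisors, (d : ℂ) ^ k‖ ≤ (n : ℝ) ^ (k + 1) := by
  have h : ∑ d ∈ n.divisors, (d : ℂ) ^ k = (ArithmeticFunction.sigma k n : ℂ) := by
    simp [ArithmeticFunction.sigma_apply]
  rw [h, norm_natCast]
  exact_mod_cast ArithmeticFunction.sigma_le_pow_succ k n

section series

variable (k : ℕ)

lemma summable_pow_mul_exp_neg_pi :
    Summable fun n : ℕ ↦ ((n + 1 : ℕ) : ℝ) ^ (k + 1) * Real.exp (-Real.pi) ^ (n + 1) :=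
  (summable_nat_add_iff (f := fun n : ℕ ↦ (n : ℝ) ^ (k + 1) * Real.exp (-Real.pi) ^ n) 1).2 <|
    summable_pow_mul_geometric_of_norm_lt_one (k + 1) (by simp [Real.pi_pos])

lemma norm_divisorPowerSeries_term_le (n : ℕ) {τ : ℂ} (hτ : τ ∈ {z : ℂ | 1 / 2 < z.im}) :
    ‖(∑ d ∈ (n + 1).divisors, (d : ℂ) ^ k) * qq τ ^ (n + 1)‖ ≤
      ((n + 1 : ℕ) : ℝ) ^ (k + 1) * Real.exp (-Real.pi) ^ (n + 1) := by
  rw [norm_mul, norm_pow, norm_qq]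
  gcongr
  · exact norm_sum_divisors_pow_le k (n + 1)
  · have : 1 / 2 < τ.im := hτ
    nlinarith [Real.pi_pos]

lemma isOpen_half_lt_im : IsOpen {z : ℂ | 1 / 2 < z.im} :=
  isOpen_lt continuous_const continuous_im

lemma I_mem_half_lt_im : I ∈ {z : ℂ | 1 / 2 < z.im} := by
  norm_num

lemma differentiableOn_divisorPowerSeries_term (n : ℕ) (s : Set ℂ) :
    DifferentiableOn ℂ
      (fun τ ↦ (∑ d ∈ (n + 1).divisors, (d : ℂ) ^ k) * qq τ ^ (n + 1)) s := fun τ _ ↦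
  ((hasDerivAt_qq_pow (n + 1) τ).const_mul _).differentiableAt.differentiableWithinAt

lemma analyticAt_divisorPowerSeries : AnalyticAt ℂ (divisorPowerSeries k) I :=
  (differentiableOn_tsum_of_summable_norm (summable_pow_mul_exp_neg_pi k)
    (fun n ↦ differentiableOn_divisorPowerSeries_term k n _) isOpen_half_lt_im
    (fun n _ hw ↦ norm_divisorPowerSeries_term_le k n hw)).analyticAt
    (isOpen_half_lt_im.mem_nhds I_mem_half_lt_im)

lemma hasSum_deriv_divisorPowerSeries :
    HasSum (fun n : ℕ ↦ (∑ d ∈ (n + 1).divisors, (d : ℂ) ^ k) *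
      (2 * Real.pi * I * (n + 1 : ℕ) * qq I ^ (n + 1))) (deriv (divisorPowerSeries k) I) := by
  have h := hasSum_deriv_of_summable_norm (summable_pow_mul_exp_neg_pi k)
    (fun n ↦ differentiableOn_divisorPowerSeries_term k n _) isOpen_half_lt_im
    (fun n _ hw ↦ norm_divisorPowerSeries_term_le k n hw) I_mem_half_lt_im
  exact h.congr_fun fun n : ℕ ↦ (((hasDerivAt_qq_pow (n + 1) I).const_mul _).deriv).symm

lemma divisorPowerSeries_I_re_nonneg : 0 ≤ (divisorPowerSeries k I).re := by
  have h : Summable fun n : ℕ ↦ (∑ d ∈ (n + 1).divisors, (d : ℂ) ^ k) * qq I ^ (n + 1) :=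
    .of_norm_bounded (summable_pow_mul_exp_neg_pi k)
      fun n ↦ norm_divisorPowerSeries_term_le k n I_mem_half_lt_im
  rw [divisorPowerSeries, re_tsum h]
  refine tsum_nonneg fun n ↦ ?_
  rw [qq_I]
  norm_cast
  positivity

lemma deriv_divisorPowerSeries_I_ne_zero : deriv (divisorPowerSeries k) I ≠ 0 := by
  have h := hasSum_im (hasSum_deriv_divisorPowerSeries k)
  have e (n : ℕ) : ((∑ d ∈ (n + 1).divisors, (d : ℂ) ^ k) *
      (2 * Real.pi * I * (n + 1 : ℕ) * qq I ^ (n + 1))).im =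
      (∑ d ∈ (n + 1).divisors, (d : ℝ) ^ k) *
        (2 * Real.pi * (n + 1 : ℕ) * Real.exp (-(2 * Real.pi)) ^ (n + 1)) := by
    rw [qq_I, show (∑ d ∈ (n + 1).divisors, (d : ℂ) ^ k) *
      (2 * Real.pi * I * (n + 1 : ℕ) * (Real.exp (-(2 * Real.pi)) : ℝ) ^ (n + 1)) =
      (((∑ d ∈ (n + 1).divisors, (d : ℝ) ^ k) *
        (2 * Real.pi * (n + 1 : ℕ) * Real.exp (-(2 * Real.pi)) ^ (n + 1)) : ℝ) : ℂ) * I by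
      push_cast
      ring]
    rw [im_ofReal_mul, I_im, mul_one]
  simp_rw [e] at h
  intro h0
  have hpos : 0 < (deriv (divisorPowerSeries k) I).im := by
    rw [← h.tsum_eq]
    refine h.summable.tsum_pos (fun n ↦ by positivity) 0 ?_
    simp only [zero_add, Nat.divisors_one, Finset.sum_singleton, Nat.cast_one, one_pow, one_mul,
      mul_one, pow_one]
    positivity
  simp [h0] at hpos

end series

section modularity

open UpperHalfPlane MatrixGroups

lemma eisenstein_inversion {k : ℕ} (hk : 3 ≤ k) (z : ℍ) :
    ModularForm.E hk (.mk _ z.im_inv_neg_coe_pos) = (z : ℂ) ^ k * ModularForm.E hk z := by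
  have h := congr_fun (SlashInvariantForm.slash_action_eqn (ModularForm.E hk)
    (ModularGroup.S : SL(2, ℤ)) (MonoidHom.mem_range.2 ⟨_, rfl⟩)) z
  have h2 := SlashInvariantForm.slash_S_apply (ModularForm.E hk) k z
  rw [ModularForm.SL_slash, h] at h2
  rw [h2, mul_comm, mul_assoc, zpow_neg, zpow_natCast,
    inv_mul_cancel₀ (pow_ne_zero _ z.ne_zero), mul_one]

lemma eisenstein_eq {k : ℕ} (hk : 3 ≤ k) (hk2 : Even k) (z : ℍ) :
    ModularForm.E hk z = 1 - (2 * k / bernoulli k) * divisorPowerSeries (k - 1) z := by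
  rw [EisensteinSeries.q_expansion_bernoulli hk hk2, divisorPowerSeries]
  congr 2
  rw [← tsum_pnat_eq_tsum_succ (f := fun n ↦ (∑ d ∈ n.divisors, (d : ℂ) ^ (k - 1)) * qq z ^ n)]
  simp [ArithmeticFunction.sigma_apply, qq]

lemma E4_coe (z : ℍ) : E4 z = ModularForm.E₄ z := by
  rw [eisenstein_eq _ ⟨2, rfl⟩, E4_eq, show bernoulli 4 = -1 / 30 by decide +kernel]
  norm_num

lemma E6_coe (z : ℍ) : E6 z = ModularForm.E₆ z := by
  rw [eisenstein_eq _ ⟨3, rfl⟩, E6_eq, show bernoulli 6 = 1 / 42 by decide +kernel]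
  norm_num

lemma E4_inversion {τ : ℂ} (hτ : 0 < τ.im) : E4 (-τ⁻¹) = τ ^ 4 * E4 τ := by
  lift τ to ℍ using hτ
  have h := eisenstein_inversion (k := 4) (by norm_num) τ
  rw [← E4_coe, ← E4_coe] at h
  simpa [inv_neg] using h

lemma E6_inversion {τ : ℂ} (hτ : 0 < τ.im) : E6 (-τ⁻¹) = τ ^ 6 * E6 τ := by
  lift τ to ℍ using hτ
  have h := eisenstein_inversion (k := 6) (by norm_num) τ
  rw [← E6_coe, ← E6_coe] at h
  simpa [inv_neg] using h

lemma J_inversion {τ : ℂ} (hτ : 0 < τ.im) : _root_.J (-τ⁻¹) = _root_.J τ := by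
  have h0 : τ ≠ 0 := by
    rintro rfl
    simp at hτ
  rw [_root_.J, _root_.J, E4_inversion hτ, E6_inversion hτ,
    ← mul_div_mul_left (E4 τ ^ 3) _ (pow_ne_zero 12 h0)]
  congr 1 <;> ring

end modularity

lemma E6_I : E6 I = 0 := by
  have h := E6_inversion (τ := I) (by simp)
  rw [inv_I, neg_neg, show I ^ 6 = -1 by rw [show 6 = 2 * 3 by rfl, pow_mul, I_sq]; norm_num] at h
  linear_combination h / 2

lemma E4_I_ne_zero : E4 I ≠ 0 := by
  intro h
  have h' := congr_arg re h
  rw [E4_eq] at h'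
  norm_num at h'
  linarith [divisorPowerSeries_I_re_nonneg 3]

lemma deriv_E6_I_ne_zero : deriv E6 I ≠ 0 := by
  have h := ((analyticAt_divisorPowerSeries 5).differentiableAt.hasDerivAt.const_mul
    (504 : ℂ)).const_sub 1
  rw [show deriv E6 I = _ from h.deriv]
  simpa using deriv_divisorPowerSeries_I_ne_zero 5

lemma analyticAt_E4 : AnalyticAt ℂ E4 I :=
  analyticAt_const.add (analyticAt_const.mul (analyticAt_divisorPowerSeries 3))

lemma analyticAt_E6 : AnalyticAt ℂ E6 I :=
  analyticAt_const.sub (analyticAt_const.mul (analyticAt_divisorPowerSeries 5))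

lemma discriminant_I_ne_zero : E4 I ^ 3 - E6 I ^ 2 ≠ 0 := by
  simp [E6_I, E4_I_ne_zero]

lemma iteratedDeriv_two_sq_mul {e g : ℂ → ℂ} {z : ℂ} (he : AnalyticAt ℂ e z)
    (hg : AnalyticAt ℂ g z) (h0 : e z = 0) :
    iteratedDeriv 2 (fun τ ↦ e τ ^ 2 * g τ) z = 2 * deriv e z ^ 2 * g z := by
  have h1 : deriv (fun τ ↦ e τ ^ 2 * g τ) =ᶠ[𝓝 z]
      fun τ ↦ e τ * (2 * deriv e τ * g τ + e τ * deriv g τ) := by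
    filter_upwards [he.eventually_analyticAt, hg.eventually_analyticAt] with τ he hg
    refine ((he.differentiableAt.hasDerivAt.pow 2).mul
      hg.differentiableAt.hasDerivAt).deriv.trans ?_
    simp only [Nat.cast_ofNat, Nat.add_one_sub_one, pow_one, Pi.pow_apply]
    ring
  rw [iteratedDeriv_succ, iteratedDeriv_one, h1.deriv_eq]
  have h2 : DifferentiableAt ℂ (fun τ ↦ 2 * deriv e τ * g τ + e τ * deriv g τ) z :=
    (((analyticAt_const.mul he.deriv).mul hg).add (he.mul hg.deriv)).differentiableAt
  refine (he.differentiableAt.hasDerivAt.mul h2.hasDerivAt).deriv.trans ?_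
  simp [h0]
  ring

/-- The derivatives at `I` of a function invariant under `τ ↦ -1/τ`. -/
lemma deriv_of_inversion_invariant {f : ℂ → ℂ} (hf : AnalyticAt ℂ f I)
    (h : ∀ᶠ τ in 𝓝 I, f (-τ⁻¹) = f τ) :
    deriv f I = 0 ∧ iteratedDeriv 3 f I = 3 * I * iteratedDeriv 2 f I := by
  have hI : -I⁻¹ = I := by simp
  have hinv {τ : ℂ} (hτ : τ ≠ 0) : HasDerivAt (fun τ ↦ -τ⁻¹) ((τ ^ 2)⁻¹) τ := by
    simpa using (hasDerivAt_inv hτ).fun_neg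
  have hcont : Tendsto (fun τ : ℂ ↦ -τ⁻¹) (𝓝 I) (𝓝 I) := by
    simpa using (hinv I_ne_zero).continuousAt.tendsto
  have hne : ∀ᶠ τ : ℂ in 𝓝 I, τ ≠ 0 := eventually_ne_nhds I_ne_zero
  have comp {g : ℂ → ℂ} {τ : ℂ} (hg : AnalyticAt ℂ g (-τ⁻¹)) (hτ : τ ≠ 0) :
      HasDerivAt (fun τ ↦ g (-τ⁻¹)) (deriv g (-τ⁻¹) * (τ ^ 2)⁻¹) τ :=
    hg.differentiableAt.hasDerivAt.comp τ (hinv hτ)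
  have h1 : ∀ᶠ τ in 𝓝 I, deriv f (-τ⁻¹) = τ ^ 2 * deriv f τ := by
    filter_upwards [h.eventually_nhds, hcont.eventually hf.eventually_analyticAt, hne]
      with τ hτ ha h0
    rw [← EventuallyEq.deriv_eq hτ, (comp ha h0).deriv]
    field_simp
  have h2 : ∀ᶠ τ in 𝓝 I, deriv (deriv f) (-τ⁻¹) =
      2 * τ ^ 3 * deriv f τ + τ ^ 4 * deriv (deriv f) τ := by
    filter_upwards [h1.eventually_nhds, hcont.eventually hf.eventually_analyticAt,
      hf.eventually_analyticAt, hne] with τ hτ ha hb h0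
    have e := EventuallyEq.deriv_eq hτ
    rw [(comp ha.deriv h0).deriv,
      ((hasDerivAt_pow 2 τ).fun_mul hb.deriv.differentiableAt.hasDerivAt).deriv] at e
    rw [mul_inv_eq_iff_eq_mul₀ (pow_ne_zero 2 h0)] at e
    rw [e]
    push_cast
    ring
  have d1 : deriv f I = 0 := by
    have e := h1.self_of_nhds
    rw [hI, I_sq] at e
    linear_combination e / 2
  refine ⟨d1, ?_⟩
  have e := EventuallyEq.deriv_eq h2
  rw [(comp (by rw [hI]; exact hf.deriv.deriv) I_ne_zero).deriv, hI,
    ((((hasDerivAt_pow 3 I).const_mul 2).fun_mul hf.deriv.differentiableAt.hasDerivAt).fun_add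
      ((hasDerivAt_pow 4 I).fun_mul hf.deriv.deriv.differentiableAt.hasDerivAt)).deriv] at e
  simp only [iteratedDeriv_succ, iteratedDeriv_zero]
  simp [d1, I_pow_three, I_pow_four] at e
  linear_combination -e / 2

lemma analyticAt_J : AnalyticAt ℂ J I :=
  (analyticAt_E4.pow 3).div ((analyticAt_E4.pow 3).sub (analyticAt_E6.pow 2))
    discriminant_I_ne_zero

lemma iteratedDeriv_two_J_I :
    iteratedDeriv 2 J I = 2 * deriv E6 I ^ 2 * (E4 I ^ 3 - E6 I ^ 2)⁻¹ := by
  have hD : AnalyticAt ℂ (fun τ ↦ E4 τ ^ 3 - E6 τ ^ 2) I :=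
    (analyticAt_E4.pow 3).sub (analyticAt_E6.pow 2)
  have h : J =ᶠ[𝓝 I] fun τ ↦ 1 + E6 τ ^ 2 * (E4 τ ^ 3 - E6 τ ^ 2)⁻¹ := by
    filter_upwards [hD.continuousAt.eventually_ne discriminant_I_ne_zero] with τ hτ
    rw [J]
    field_simp
    ring
  rw [h.iteratedDeriv_eq, iteratedDeriv_const_add two_pos,
    iteratedDeriv_two_sq_mul analyticAt_E6 (hD.fun_inv discriminant_I_ne_zero) E6_I]

/-- `J` has a critical point at `i`: `J'(i) = 0`, `J''(i) ≠ 0`, and `J'''(i) = 3i·J''(i)`. -/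
theorem J_derivatives_at_i :
    deriv J Complex.I = 0 ∧
    iteratedDeriv 2 J Complex.I ≠ 0 ∧
    iteratedDeriv 3 J Complex.I = 3 * Complex.I * iteratedDeriv 2 J Complex.I := by
  have h := deriv_of_inversion_invariant analyticAt_J <| by
    filter_upwards [isOpen_half_lt_im.mem_nhds I_mem_half_lt_im] with τ hτ
    exact J_inversion (one_half_pos.trans hτ)
  refine ⟨h.1, ?_, h.2⟩
  rw [iteratedDeriv_two_J_I]
  exact mul_ne_zero (mul_ne_zero two_ne_zero (pow_ne_zero 2 deriv_E6_I_ne_zero))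
    (inv_ne_zero discriminant_I_ne_zero)
end
end

section
/- The Dedekind eta function satisfies η'(i) = (i/4) · η(i); equivalently, 12 η'(i)/η(i) = 3i. -/
open Complex Filter Topology

noncomputable section

lemma dedekindEta_eq_eta : dedekindEta = ModularForm.eta := by
  funext τ
  simp only [dedekindEta, ModularForm.eta, ModularForm.eta_q_eq_pow, qq,
    Function.Periodic.qParam]
  congr 2
  push_cast
  ring

lemma G2_I : EisensteinSeries.G2 UpperHalfPlane.I = Real.pi := by
  have h := EisensteinSeries.G2_S_transform UpperHalfPlane.I
  have hS : ModularGroup.S • UpperHalfPlane.I = UpperHalfPlane.I := by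
    rw [UpperHalfPlane.modular_S_smul]
    ext
    simp
  rw [hS, UpperHalfPlane.coe_I, I_sq, mul_div_cancel_right₀ _ I_ne_zero] at h
  linear_combination h / 2

lemma E2_I : EisensteinSeries.E2 UpperHalfPlane.I = 3 / Real.pi := by
  have hpi : (Real.pi : ℂ) ≠ 0 := mod_cast Real.pi_ne_zero
  simp only [EisensteinSeries.E2, Pi.smul_apply, smul_eq_mul, G2_I, riemannZeta_two]
  field_simp
  norm_num

lemma logDeriv_eta_I : logDeriv ModularForm.eta I = I / 4 := by
  have hpi : (Real.pi : ℂ) ≠ 0 := mod_cast Real.pi_ne_zero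
  rw [← UpperHalfPlane.coe_I, ModularForm.logDeriv_eta_eq_E2, E2_I, UpperHalfPlane.coe_I]
  field_simp
  norm_num

/-- `η'(i) = (i/4)·η(i)`, equivalently `12 η'(i)/η(i) = 3i`. -/
theorem eta_log_deriv_at_i :
    deriv dedekindEta Complex.I = Complex.I / 4 * dedekindEta Complex.I ∧
    12 * (deriv dedekindEta Complex.I / dedekindEta Complex.I) = 3 * Complex.I := by
  have hne : dedekindEta I ≠ 0 := by
    rw [dedekindEta_eq_eta]
    exact ModularForm.eta_ne_zero UpperHalfPlane.I.2
  have h : deriv dedekindEta I / dedekindEta I = I / 4 := by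
    rw [← logDeriv_apply, dedekindEta_eq_eta, logDeriv_eta_I]
  refine ⟨(div_eq_iff hne).mp h, ?_⟩
  rw [h]
  ring
end
end

section
/- Let ρ = e^{2πi/3} = (−1 + i√3)/2 ∈ ℍ. The Dedekind eta function satisfies η'(ρ)/η(ρ) = (1/2)·(1+ρ)/(1−ρ); equivalently, 24 η'(ρ)/η(ρ) = 12 (1+ρ)/(1−ρ). -/
open Complex Filter Topology

noncomputable section

lemma rho_pow_three : rho ^ 3 = 1 := by
  rw [rho, ← Complex.exp_nat_mul, ← Complex.exp_two_pi_mul_I]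
  congr 1
  push_cast
  ring

lemma im_rho_pos : 0 < rho.im := by
  have h : rho = Complex.exp ((2 * Real.pi / 3 : ℝ) * Complex.I) := by
    rw [rho]
    congr 1
    push_cast
    ring
  rw [h, Complex.exp_ofReal_mul_I_im]
  exact Real.sin_pos_of_pos_of_lt_pi (by positivity) (by linarith [Real.pi_pos])

lemma rho_ne_one : rho ≠ 1 := fun h => by
  simpa [h] using im_rho_pos

lemma rho_sq_add_rho_add_one : rho ^ 2 + rho + 1 = 0 := by
  apply mul_left_cancel₀ (sub_ne_zero.mpr rho_ne_one)
  linear_combination rho_pow_three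

open UpperHalfPlane ModularGroup EisensteinSeries MatrixGroups in
/-- The quasi-modularity of `E₂` under `z ↦ -1 / (z + 1)`, which fixes `ρ`, determines `E₂(ρ)`. -/
lemma E2_rho : (Real.pi * Complex.I / 12) * E2 ⟨rho, im_rho_pos⟩ =
    1 / 2 * ((1 + rho) / (1 - rho)) := by
  have hρ := rho_sq_add_rho_add_one
  have h1 : rho + 1 ≠ 0 := fun h => by
    simpa [eq_neg_of_add_eq_zero_left h] using im_rho_pos
  have h2 : 1 - rho ≠ 0 := sub_ne_zero.mpr rho_ne_one.symm
  have hfix : (S * T) • (⟨rho, im_rho_pos⟩ : ℍ) = ⟨rho, im_rho_pos⟩ := by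
    ext
    rw [mul_smul, UpperHalfPlane.modular_S_smul, UpperHalfPlane.modular_T_smul]
    simp
    refine inv_eq_of_mul_eq_one_right ?_
    linear_combination -hρ
  have hE := congrFun (E2_slash_action (S * T)) ⟨rho, im_rho_pos⟩
  have hc : (S * T : SL(2, ℤ)) 1 0 = 1 := by decide
  have hd : denom (S * T : SL(2, ℤ)) (⟨rho, im_rho_pos⟩ : ℍ) = rho + 1 := by
    rw [denom_apply, hc, show (S * T : SL(2, ℤ)) 1 1 = 1 by decide]
    simp
  rw [ModularForm.SL_slash_apply, hfix, hd] at hE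
  simp only [Pi.sub_apply, Pi.smul_apply, smul_eq_mul, D2, hd, hc, riemannZeta_two,
    Int.cast_one, zpow_neg, zpow_ofNat] at hE
  have hpi : (Real.pi : ℂ) ≠ 0 := by exact_mod_cast Real.pi_ne_zero
  rw [show (rho + 1) ^ 2 = rho by linear_combination hρ] at hE
  have hrho : rho ≠ 0 := fun h => by simp [h] at hρ
  field_simp at hE ⊢
  apply mul_left_cancel₀ h1
  linear_combination 2 * Complex.I * hE - 12 * hρ - 12 * rho * Complex.I_sq

/-- `η'(ρ)/η(ρ) = (1/2)·(1+ρ)/(1−ρ)`, equivalently `24 η'(ρ)/η(ρ) = 12(1+ρ)/(1−ρ)`. -/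
theorem eta_log_deriv_at_rho :
    deriv dedekindEta rho / dedekindEta rho = 1 / 2 * ((1 + rho) / (1 - rho)) ∧
    24 * (deriv dedekindEta rho / dedekindEta rho) = 12 * ((1 + rho) / (1 - rho)) := by
  have h : deriv dedekindEta rho / dedekindEta rho = 1 / 2 * ((1 + rho) / (1 - rho)) := by
    rw [← E2_rho, ← ModularForm.logDeriv_eta_eq_E2, dedekindEta_eq_eta, logDeriv_apply]
  exact ⟨h, by rw [h]; ring⟩
end
end

section
/- For every τ in the upper half-plane with J(τ) ≠ 0 and J(τ) ≠ 1 (so that J'(τ) ≠ 0 and E4(τ) ≠ 0), the logarithmic derivative of E4 satisfies E4'(τ)/E4(τ) = 2 J''(τ)/J'(τ) − J'(τ)/J(τ) − J'(τ)/(J(τ) − 1). -/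
open Complex Filter Topology

noncomputable section

section

open UpperHalfPlane hiding I J
open Derivative ModularForm EisensteinSeries CongruenceSubgroup
open scoped MatrixGroups Manifold ModularForm

local notation "𝕢" => Function.Periodic.qParam

/-- The normalized derivative acts on a level one modular form as `q d/dq` on its cusp function. -/
lemma normalizedDeriv_eq_qParam_mul_deriv_cuspFunction {k : ℤ} (f : ModularForm 𝒮ℒ k) (z : ℍ) :
    normalizedDerivOfComplex f z = 𝕢 1 z * deriv (cuspFunction 1 f) (𝕢 1 z) := by
  have hq : HasDerivAt (fun w : ℂ ↦ 𝕢 1 w) (𝕢 1 z * (2 * Real.pi * I)) (z : ℂ) := by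
    have : HasDerivAt (fun w : ℂ ↦ 2 * Real.pi * I * w / (1 : ℝ)) (2 * Real.pi * I) (z : ℂ) := by
      simpa using (hasDerivAt_id (z : ℂ)).const_mul (2 * Real.pi * I)
    exact this.cexp
  have hF := (ModularFormClass.differentiableAt_cuspFunction f one_pos one_mem_strictPeriods_SL
    (Function.Periodic.norm_qParam_lt_one one_pos z.im_pos)).hasDerivAt
  have hcomp := hF.comp (z : ℂ) hq
  have heq : (f ∘ ofComplex : ℂ → ℂ) =ᶠ[𝓝 (z : ℂ)] cuspFunction 1 f ∘ fun w : ℂ ↦ 𝕢 1 w := by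
    filter_upwards [isOpen_upperHalfPlaneSet.mem_nhds z.im_pos] with w hw
    have := SlashInvariantFormClass.eq_cuspFunction f ⟨w, hw⟩ one_mem_strictPeriods_SL one_ne_zero
    simpa [ofComplex_apply_of_im_pos hw] using this.symm
  rw [normalizedDerivOfComplex, heq.deriv_eq, hcomp.deriv]
  field_simp

/-- The first Rankin–Cohen bracket of functions of weights `k` and `l`. -/
def rankinCohenBracket (k l : ℤ) (f g : ℍ → ℂ) : ℍ → ℂ :=
  (k : ℂ) • (f * normalizedDerivOfComplex g) - (l : ℂ) • (g * normalizedDerivOfComplex f)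

lemma rankinCohenBracket_eq_serreDerivative (k l : ℤ) (f g : ℍ → ℂ) :
    rankinCohenBracket k l f g =
      (k : ℂ) • (f * serreDerivative l g) - (l : ℂ) • (g * serreDerivative k f) := by
  ext z
  simp only [rankinCohenBracket, Pi.sub_apply, Pi.smul_apply, Pi.mul_apply, smul_eq_mul,
    serreDerivative_apply]
  ring

lemma rankinCohenBracket_slash {k l : ℤ} {f g : ℍ → ℂ} (hf : MDiff f) (hg : MDiff g) {γ : SL(2, ℤ)}
    (hfγ : f ∣[k] γ = f) (hgγ : g ∣[l] γ = g) :
    rankinCohenBracket k l f g ∣[k + l + 2] γ = rankinCohenBracket k l f g := by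
  have h1 : (f * serreDerivative l g) ∣[k + l + 2] γ = f * serreDerivative l g := by
    rw [add_assoc, mul_slash_SL2, hfγ, serreDerivative_slash_invariant hg hgγ]
  have h2 : (g * serreDerivative k f) ∣[k + l + 2] γ = g * serreDerivative k f := by
    rw [add_comm k l, add_assoc, mul_slash_SL2, hgγ, serreDerivative_slash_invariant hf hfγ]
  rw [rankinCohenBracket_eq_serreDerivative, sub_eq_add_neg, SlashAction.add_slash,
    SlashAction.neg_slash, SL_smul_slash, SL_smul_slash, h1, h2]

lemma rankinCohenBracket_eq_qParam_mul {k l : ℤ} (f : ModularForm 𝒮ℒ k) (g : ModularForm 𝒮ℒ l)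
    (z : ℍ) :
    rankinCohenBracket k l f g z = 𝕢 1 z *
      (fun q ↦ k * (cuspFunction 1 f q * deriv (cuspFunction 1 g) q) -
        l * (cuspFunction 1 g q * deriv (cuspFunction 1 f) q)) (𝕢 1 z) := by
  simp only [rankinCohenBracket, Pi.sub_apply, Pi.smul_apply, Pi.mul_apply, smul_eq_mul,
    normalizedDeriv_eq_qParam_mul_deriv_cuspFunction,
    SlashInvariantFormClass.eq_cuspFunction f z one_mem_strictPeriods_SL one_ne_zero,
    SlashInvariantFormClass.eq_cuspFunction g z one_mem_strictPeriods_SL one_ne_zero]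
  ring

/-- The leading `q`-coefficient of the Rankin–Cohen bracket of two level one forms. -/
lemma tendsto_rankinCohenBracket_div_qParam {k l : ℤ} (f : ModularForm 𝒮ℒ k)
    (g : ModularForm 𝒮ℒ l) :
    Tendsto (fun z : ℍ ↦ rankinCohenBracket k l f g z / 𝕢 1 z) atImInfty
      (𝓝 (k * ((qExpansion 1 f).coeff 0 * (qExpansion 1 g).coeff 1) -
        l * ((qExpansion 1 g).coeff 0 * (qExpansion 1 f).coeff 1))) := by
  have hf := ModularFormClass.analyticAt_cuspFunction_zero f one_pos one_mem_strictPeriods_SL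
  have hg := ModularFormClass.analyticAt_cuspFunction_zero g one_pos one_mem_strictPeriods_SL
  have hcont : ContinuousAt (fun q ↦ k * (cuspFunction 1 f q * deriv (cuspFunction 1 g) q) -
      l * (cuspFunction 1 g q * deriv (cuspFunction 1 f) q)) 0 :=
    ((hf.continuousAt.mul hg.deriv.continuousAt).const_mul _).sub
      ((hg.continuousAt.mul hf.deriv.continuousAt).const_mul _)
  have := hcont.tendsto.comp (qParam_tendsto_atImInfty one_pos)
  simp only [qExpansion_coeff, iteratedDeriv_zero, iteratedDeriv_one, Nat.factorial, Nat.cast_one,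
    inv_one, one_mul, mul_one]
  refine this.congr fun z ↦ ?_
  rw [rankinCohenBracket_eq_qParam_mul, mul_div_cancel_left₀ _ (Function.Periodic.qParam_ne_zero _)]
  rfl

lemma isZeroAtImInfty_rankinCohenBracket {k l : ℤ} (f : ModularForm 𝒮ℒ k)
    (g : ModularForm 𝒮ℒ l) : IsZeroAtImInfty (rankinCohenBracket k l f g) := by
  have := (qParam_tendsto_atImInfty one_pos).mul (tendsto_rankinCohenBracket_div_qParam f g)
  rw [zero_mul] at this
  exact this.congr fun z ↦ mul_div_cancel₀ _ (Function.Periodic.qParam_ne_zero _)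

/-- The Rankin–Cohen bracket of two level one modular forms, as a cusp form. -/
def rankinCohenCuspForm {k l : ℤ} (f : ModularForm 𝒮ℒ k) (g : ModularForm 𝒮ℒ l) :
    CuspForm 𝒮ℒ (k + l + 2) where
  toFun := rankinCohenBracket k l f g
  slash_action_eq' A hA := by
    obtain ⟨γ, rfl⟩ := hA
    exact rankinCohenBracket_slash f.holo' g.holo' (f.slash_action_eq' _ ⟨γ, rfl⟩)
      (g.slash_action_eq' _ ⟨γ, rfl⟩)
  holo' := ((f.holo'.mul (normalizedDerivOfComplex_mdifferentiable g.holo')).const_smul _).sub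
    ((g.holo'.mul (normalizedDerivOfComplex_mdifferentiable f.holo')).const_smul _)
  zero_at_cusps' hc := by
    rw [Subgroup.IsArithmetic.isCusp_iff_isCusp_SL2Z] at hc
    rw [OnePoint.isZeroAt_iff_forall_SL2Z hc]
    intro γ _
    have hγ : rankinCohenBracket k l f g ∣[k + l + 2] γ = rankinCohenBracket k l f g :=
      rankinCohenBracket_slash f.holo' g.holo' (f.slash_action_eq' _ ⟨γ, rfl⟩)
        (g.slash_action_eq' _ ⟨γ, rfl⟩)
    rw [hγ]
    exact isZeroAtImInfty_rankinCohenBracket f g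

/-- The bracket of `E₄` and `E₆` is a nonzero multiple of `E₄ ^ 3 - E₆ ^ 2`. -/
lemma exists_rankinCohenBracket_E₄_E₆_eq :
    ∃ c : ℂ, c ≠ 0 ∧ ∀ z : ℍ, rankinCohenBracket 4 6 E₄ E₆ z = c * (E₄ z ^ 3 - E₆ z ^ 2) := by
  obtain ⟨c, hc⟩ :=
    CuspForm.exists_smul_discriminant_of_weight_eq_twelve (rankinCohenCuspForm E₄ E₆)
  have hcz (z : ℍ) : rankinCohenBracket 4 6 E₄ E₆ z = c * ModularForm.discriminant z :=
    (DFunLike.congr_fun hc z).symm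
  refine ⟨c / 1728, ?_, fun z ↦ ?_⟩
  · rw [div_ne_zero_iff]
    refine ⟨?_, by norm_num⟩
    rintro rfl
    have h := tendsto_rankinCohenBracket_div_qParam E₄ E₆
    simp only [hcz, zero_mul, zero_div] at h
    have := tendsto_nhds_unique h tendsto_const_nhds
    rw [E_qExpansion_coeff_zero _ ⟨2, rfl⟩, E_qExpansion_coeff_zero _ ⟨3, rfl⟩,
      E₄_qExpansion_coeff_one, E₆_qExpansion_coeff_one] at this
    norm_num at this
  · rw [hcz, discriminant_eq_E₄_cube_sub_E₆_sq]
    ring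

lemma tsum_sum_divisors_pow_mul_qq_pow (k : ℕ) (z : ℍ) :
    ∑' n : ℕ, (∑ d ∈ (n + 1).divisors, (d : ℂ) ^ k) * qq z ^ (n + 1) =
      ∑' n : ℕ+, (ArithmeticFunction.sigma k n : ℂ) * cexp (2 * Real.pi * I * z) ^ ((n : ℕ) : ℤ) := by
  simp_rw [zpow_natCast]
  rw [tsum_pnat_eq_tsum_succ
    (f := fun n ↦ (ArithmeticFunction.sigma k n : ℂ) * cexp (2 * Real.pi * I * z) ^ n)]
  simp [ArithmeticFunction.sigma_apply, qq]

lemma E4_eq_E₄ (z : ℍ) : E4 z = E₄ z := by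
  rw [q_expansion_bernoulli _ ⟨2, rfl⟩, E4, tsum_sum_divisors_pow_mul_qq_pow]
  norm_num [bernoulli, bernoulli'_four]

lemma E6_eq_E₆ (z : ℍ) : E6 z = E₆ z := by
  have hb : bernoulli 6 = 1 / 42 := by decide +kernel
  rw [q_expansion_bernoulli _ ⟨3, rfl⟩, E6, tsum_sum_divisors_pow_mul_qq_pow, hb]
  norm_num

lemma E4_eventuallyEq {τ : ℂ} (hτ : 0 < τ.im) : E4 =ᶠ[𝓝 τ] E₄ ∘ ofComplex := by
  filter_upwards [isOpen_upperHalfPlaneSet.mem_nhds hτ] with w hw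
  simpa [ofComplex_apply_of_im_pos hw] using E4_eq_E₄ ⟨w, hw⟩

lemma E6_eventuallyEq {τ : ℂ} (hτ : 0 < τ.im) : E6 =ᶠ[𝓝 τ] E₆ ∘ ofComplex := by
  filter_upwards [isOpen_upperHalfPlaneSet.mem_nhds hτ] with w hw
  simpa [ofComplex_apply_of_im_pos hw] using E6_eq_E₆ ⟨w, hw⟩

lemma differentiableAt_E4 {τ : ℂ} (hτ : 0 < τ.im) : DifferentiableAt ℂ E4 τ :=
  (UpperHalfPlane.mdifferentiableAt_iff.mp (E₄.holo' ⟨τ, hτ⟩)).congr_of_eventuallyEq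
    (E4_eventuallyEq hτ)

lemma differentiableAt_E6 {τ : ℂ} (hτ : 0 < τ.im) : DifferentiableAt ℂ E6 τ :=
  (UpperHalfPlane.mdifferentiableAt_iff.mp (E₆.holo' ⟨τ, hτ⟩)).congr_of_eventuallyEq
    (E6_eventuallyEq hτ)

lemma E4_cube_sub_E6_sq_ne_zero {τ : ℂ} (hτ : 0 < τ.im) : E4 τ ^ 3 - E6 τ ^ 2 ≠ 0 := by
  have h := discriminant_ne_zero ⟨τ, hτ⟩
  rw [discriminant_eq_E₄_cube_sub_E₆_sq, ← E4_eq_E₄, ← E6_eq_E₆] at h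
  exact fun h0 ↦ h (by simp [h0])

lemma exists_wronskian_E4_E6_eq :
    ∃ c : ℂ, c ≠ 0 ∧ ∀ τ : ℂ, 0 < τ.im →
      2 * E4 τ * deriv E6 τ - 3 * E6 τ * deriv E4 τ = c * (E4 τ ^ 3 - E6 τ ^ 2) := by
  obtain ⟨c, hc, h⟩ := exists_rankinCohenBracket_E₄_E₆_eq
  refine ⟨c * (Real.pi * I), by simp [hc, Real.pi_ne_zero], fun τ hτ ↦ ?_⟩
  have hz := h ⟨τ, hτ⟩
  simp only [rankinCohenBracket, Pi.sub_apply, Pi.smul_apply, Pi.mul_apply, smul_eq_mul,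
    normalizedDerivOfComplex, ← (E4_eventuallyEq hτ).deriv_eq, ← (E6_eventuallyEq hτ).deriv_eq,
    ← E4_eq_E₄, ← E6_eq_E₆] at hz
  have hpi : (Real.pi : ℂ) ≠ 0 := by simp [Real.pi_ne_zero]
  field_simp at hz
  push_cast at hz
  linear_combination hz / 2

/-- `J'` is a nonzero multiple of `E₄² E₆ / (E₄³ - E₆²)`. -/
lemma hasDerivAt_J {c τ : ℂ} (hτ : 0 < τ.im)
    (h : 2 * E4 τ * deriv E6 τ - 3 * E6 τ * deriv E4 τ = c * (E4 τ ^ 3 - E6 τ ^ 2)) :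
    HasDerivAt J (c * (E4 τ ^ 2 * E6 τ / (E4 τ ^ 3 - E6 τ ^ 2))) τ := by
  have hA := (differentiableAt_E4 hτ).hasDerivAt
  have hB := (differentiableAt_E6 hτ).hasDerivAt
  have hD := E4_cube_sub_E6_sq_ne_zero hτ
  convert! (hA.pow 3).div ((hA.pow 3).sub (hB.pow 2)) hD using 1
  simp only [Pi.sub_apply, Pi.pow_apply]
  field_simp
  push_cast
  linear_combination -(E4 τ ^ 2 * E6 τ) * h

end

/-- For `τ ∈ ℍ` with `J(τ) ∉ {0,1}`, `J'(τ) ≠ 0`, `E₄(τ) ≠ 0` and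
`E₄'/E₄ = 2 J''/J' − J'/J − J'/(J−1)`. -/
theorem E4_log_deriv_formula (τ : ℂ) (hτ : 0 < τ.im) (h0 : J τ ≠ 0) (h1 : J τ ≠ 1) :
    deriv J τ ≠ 0 ∧ E4 τ ≠ 0 ∧
    deriv E4 τ / E4 τ =
      2 * (iteratedDeriv 2 J τ / deriv J τ) - deriv J τ / J τ -
        deriv J τ / (J τ - 1) := by
  obtain ⟨c, hc, hW⟩ := exists_wronskian_E4_E6_eq
  have hD := E4_cube_sub_E6_sq_ne_zero hτ
  have hA0 : E4 τ ≠ 0 := fun h ↦ h0 (by simp [J, h])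
  have hJ1 : J τ - 1 = E6 τ ^ 2 / (E4 τ ^ 3 - E6 τ ^ 2) := by
    rw [J]
    field_simp
    ring
  have hB0 : E6 τ ≠ 0 := fun h ↦ h1 (sub_eq_zero.mp (by simp [hJ1, h]))
  have hJ' := (hasDerivAt_J hτ (hW τ hτ)).deriv
  have hA := (differentiableAt_E4 hτ).hasDerivAt
  have hB := (differentiableAt_E6 hτ).hasDerivAt
  have hev : deriv J =ᶠ[𝓝 τ] fun w ↦ c * (E4 w ^ 2 * E6 w / (E4 w ^ 3 - E6 w ^ 2)) := by
    filter_upwards [UpperHalfPlane.isOpen_upperHalfPlaneSet.mem_nhds hτ] with w hw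
    exact (hasDerivAt_J hw (hW w hw)).deriv
  have hJ'' := ((((hA.pow 2).mul hB).div ((hA.pow 3).sub (hB.pow 2)) hD).const_mul
    c).congr_of_eventuallyEq hev |>.deriv
  refine ⟨by simp [hJ', hc, hA0, hB0, hD], hA0, ?_⟩
  have hcW := eq_div_of_mul_eq hD (hW τ hτ).symm
  rw [iteratedDeriv_succ, iteratedDeriv_one, hJ'', hJ', hJ1, J]
  simp only [Pi.sub_apply, Pi.pow_apply, Pi.mul_apply]
  push_cast
  field_simp
  rw [hcW]
  field_simp
  ring
end
end
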